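/- Let a < b be reals and I ∈ ℝ. Let f_z, f_y : [a,b] → ℝ be strictly positive integrable functions with ∫ₐᵇ f_z = ∫ₐᵇ f_y = 1 and such that the likelihood ratio x ↦ f_y(x)/f_z(x) is nondecreasing on [a,b]. Let u : ℝ → ℝ be concave and strictly increasing. Let φ, ψ : [a,b] → ℝ be continuous nondecreasing functions such that x ↦ x − φ(x) and x ↦ x − ψ(x) are nondecreasing on [a,b], and such that x ↦ φ(x) − ψ(x) is quasi-monotone on [a,b]. Assume all the integrals below exist. If ∫ₐᵇ u(x − I − φ(x)) f_z(x) dx = 0 = ∫ₐᵇ u(x − I − ψ(x)) f_z(x) dx, then ∫ₐᵇ φ(x) f_y(x) dx ≥ ∫ₐᵇ ψ(x) f_y(x) dx. -/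

import Mathlib

open MeasureTheory

/-!
A quasi-monotone difference `φ - ψ` is negative only to the left of the points where it is
positive. Across these two regions the slope of `u` between the two net payoffs decreases (by
concavity, the net payoff under `φ` being nondecreasing) and the likelihood ratio increases. If both
regions are nonempty, there are therefore constants `k > 0` and `r ≥ 0` with
`u(v - ψ) - u(v - φ) ≤ k (φ - ψ)` and `r (φ - ψ) fz ≤ (φ - ψ) fy` pointwise, so that
`r (u(v - ψ) - u(v - φ)) fz ≤ k (φ - ψ) fy`, and the left-hand side has nonnegative integral. If
`φ ≤ ψ` throughout, equality of the expected utilities forces `φ = ψ` almost everywhere.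
-/

section SingleCrossing

variable {α : Type*} {s : Set α}

/-- Single crossing of zero from below, relative to the set of values on which the securities are
defined: a security is steeper than another when their difference has this property. -/
def QuasiMonotoneOn {β : Type*} [LT α] [Preorder β] [Zero β] (d : α → β) (s : Set α) : Prop :=
  ∀ ⦃x⦄, x ∈ s → ∀ ⦃y⦄, y ∈ s → x < y → 0 < d x → 0 ≤ d y

lemma QuasiMonotoneOn.lt_of_neg_of_pos {β : Type*} [LinearOrder α] [Preorder β] [Zero β]
    {d : α → β} (hd : QuasiMonotoneOn d s) {x y : α} (hx : x ∈ s) (hy : y ∈ s)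
    (hdx : d x < 0) (hdy : 0 < d y) : x < y := by
  by_contra! hyx
  rcases hyx.eq_or_lt with rfl | hyx
  · exact lt_asymm hdx hdy
  · exact (hd hy hx hyx hdy).not_gt hdx

lemma exists_forall_mul_le_mul_of_forall_neg_pos {d m : α → ℝ}
    (hm : ∀ x ∈ s, ∀ y ∈ s, d x < 0 → 0 < d y → m x ≤ m y)
    {p q : α} (hp : p ∈ s) (hq : q ∈ s) (hdp : d p < 0) (hdq : 0 < d q) :
    ∃ r ∈ Set.Icc (m p) (m q), ∀ x ∈ s, d x * r ≤ d x * m x := by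
  obtain ⟨r, hr_ub, hr_lb⟩ : (upperBounds (m '' {x ∈ s | d x < 0}) ∩
      lowerBounds (m '' {x ∈ s | 0 < d x})).Nonempty := by
    refine exists_between_of_forall_le ⟨_, p, ⟨hp, hdp⟩, rfl⟩ ⟨_, q, ⟨hq, hdq⟩, rfl⟩ ?_
    rintro _ ⟨x, ⟨hx, hdx⟩, rfl⟩ _ ⟨y, ⟨hy, hdy⟩, rfl⟩
    exact hm x hx y hy hdx hdy
  have hr_neg : ∀ x ∈ s, d x < 0 → m x ≤ r := fun x hx hdx ↦ hr_ub ⟨x, ⟨hx, hdx⟩, rfl⟩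
  have hr_pos : ∀ x ∈ s, 0 < d x → r ≤ m x := fun x hx hdx ↦ hr_lb ⟨x, ⟨hx, hdx⟩, rfl⟩
  refine ⟨r, ⟨hr_neg p hp hdp, hr_pos q hq hdq⟩, fun x hx ↦ ?_⟩
  rcases lt_trichotomy (d x) 0 with hdx | hdx | hdx
  · exact mul_le_mul_of_nonpos_left (hr_neg x hx hdx) hdx.le
  · simp [hdx]
  · exact mul_le_mul_of_nonneg_left (hr_pos x hx hdx) hdx.le

end SingleCrossing

section Concave

variable {𝕜 : Type*} [Field 𝕜] [LinearOrder 𝕜] [IsStrictOrderedRing 𝕜] {S : Set 𝕜} {u : 𝕜 → 𝕜}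

lemma slope_le_slope_of_concaveOn (hu : ConcaveOn 𝕜 S u) {w x y z : 𝕜}
    (hw : w ∈ S) (hx : x ∈ S) (hy : y ∈ S) (hz : z ∈ S) (hwx : w < x) (hxy : x ≤ y) (hyz : y < z) :
    slope u y z ≤ slope u w x := by
  simp only [slope_def_field]
  rcases hxy.eq_or_lt with rfl | hxy
  · exact hu.slope_anti_adjacent hw hz hwx hyz
  · exact (hu.slope_anti_adjacent hx hz hxy hyz).trans (hu.slope_anti_adjacent hw hy hwx hxy)

end Concave

namespace QuasiMonotoneOn

variable {α : Type*} [LinearOrder α] {s : Set α} {S : Set ℝ} {u : ℝ → ℝ} {g h : α → ℝ} {p q : α}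

/-- `k` separates the slopes of `u` between `g x` and `h x` on the region `h < g` from those on the
region `g < h`. -/
lemma exists_pos_forall_comp_sub_le (hd : QuasiMonotoneOn (fun x ↦ h x - g x) s)
    (hu : ConcaveOn ℝ S u) (humono : StrictMonoOn u S)
    (hgS : Set.MapsTo g s S) (hhS : Set.MapsTo h s S) (hg : MonotoneOn g s)
    (hp : p ∈ s) (hq : q ∈ s) (hdp : h p < g p) (hdq : g q < h q) :
    ∃ k > 0, ∀ x ∈ s, u (h x) - u (g x) ≤ k * (h x - g x) := by
  have hslope : ∀ x ∈ s, ∀ y ∈ s, g x - h x < 0 → 0 < g y - h y →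
      slope u (g x) (h x) ≤ slope u (g y) (h y) := by
    intro x hx y hy hdx hdy
    rw [sub_neg] at hdx
    rw [sub_pos] at hdy
    have hyx : y < x := hd.lt_of_neg_of_pos hy hx (sub_neg.2 hdy) (sub_pos.2 hdx)
    rw [slope_comm u (g y)]
    exact slope_le_slope_of_concaveOn hu (hhS hy) (hgS hy) (hgS hx) (hhS hx) hdy
      (hg hy hx hyx.le) hdx
  obtain ⟨k, ⟨hqk, -⟩, hk⟩ := exists_forall_mul_le_mul_of_forall_neg_pos hslope hq hp
    (sub_neg.2 hdq) (sub_pos.2 hdp)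
  have hslope_pos : 0 < slope u (g q) (h q) := humono.slope_pos (hgS hq) (hhS hq) hdq.ne
  refine ⟨k, hslope_pos.trans_le hqk, fun x hx ↦ ?_⟩
  have hsub : (h x - g x) * slope u (g x) (h x) = u (h x) - u (g x) := sub_smul_slope u (g x) (h x)
  linarith [hk x hx]

lemma exists_forall_mul_comp_sub_mul_le (hd : QuasiMonotoneOn (fun x ↦ h x - g x) s)
    (hu : ConcaveOn ℝ S u) (humono : StrictMonoOn u S)
    (hgS : Set.MapsTo g s S) (hhS : Set.MapsTo h s S) (hg : MonotoneOn g s) {f₁ f₂ : α → ℝ}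
    (hf₁ : ∀ x ∈ s, 0 < f₁ x) (hf₂ : ∀ x ∈ s, 0 ≤ f₂ x)
    (hratio : MonotoneOn (fun x ↦ f₂ x / f₁ x) s)
    (hp : p ∈ s) (hq : q ∈ s) (hdp : h p < g p) (hdq : g q < h q) :
    ∃ k > 0, ∃ r ≥ 0, ∀ x ∈ s,
      r * ((u (h x) - u (g x)) * f₁ x) ≤ k * ((h x - g x) * f₂ x) := by
  obtain ⟨k, hk_pos, hk⟩ := hd.exists_pos_forall_comp_sub_le hu humono hgS hhS hg hp hq hdp hdq
  obtain ⟨r, ⟨hpr, -⟩, hr⟩ := exists_forall_mul_le_mul_of_forall_neg_pos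
    (fun x hx y hy hdx hdy ↦ hratio hx hy (hd.lt_of_neg_of_pos hx hy hdx hdy).le)
    hp hq (sub_neg.2 hdp) (sub_pos.2 hdq)
  have hr_nonneg : 0 ≤ r := (div_nonneg (hf₂ p hp) (hf₁ p hp).le).trans hpr
  refine ⟨k, hk_pos, r, hr_nonneg, fun x hx ↦ ?_⟩
  have hf₁x : 0 < f₁ x := hf₁ x hx
  calc r * ((u (h x) - u (g x)) * f₁ x)
      = r * f₁ x * (u (h x) - u (g x)) := by ring
    _ ≤ r * f₁ x * (k * (h x - g x)) := by gcongr; exact hk x hx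
    _ = k * f₁ x * ((h x - g x) * r) := by ring
    _ ≤ k * f₁ x * ((h x - g x) * (f₂ x / f₁ x)) :=
      mul_le_mul_of_nonneg_left (hr x hx) (mul_pos hk_pos hf₁x).le
    _ = k * ((h x - g x) * f₂ x) := by field_simp

end QuasiMonotoneOn

section Integral

variable {α : Type*} [MeasurableSpace α] {μ : Measure α} {s : Set α}

lemma ae_eq_of_le_of_setIntegral_comp_mul_le (hs : MeasurableSet s)
    {f : α → ℝ} (hf : ∀ x ∈ s, 0 < f x) {S : Set ℝ} {u : ℝ → ℝ} (hu : StrictMonoOn u S)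
    {g h : α → ℝ} (hgS : Set.MapsTo g s S) (hhS : Set.MapsTo h s S) (hhg : ∀ x ∈ s, h x ≤ g x)
    (hg_int : IntegrableOn (fun x ↦ u (g x) * f x) s μ)
    (hh_int : IntegrableOn (fun x ↦ u (h x) * f x) s μ)
    (hle : ∫ x in s, u (g x) * f x ∂μ ≤ ∫ x in s, u (h x) * f x ∂μ) :
    h =ᵐ[μ.restrict s] g := by
  have hmul_le : ∀ x ∈ s, u (h x) * f x ≤ u (g x) * f x := fun x hx ↦
    mul_le_mul_of_nonneg_right (hu.monotoneOn (hhS hx) (hgS hx) (hhg x hx)) (hf x hx).le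
  have hae := (integral_eq_iff_of_ae_le hh_int hg_int
    (ae_restrict_of_forall_mem hs hmul_le)).1
    ((setIntegral_mono_on hh_int hg_int hs hmul_le).antisymm hle)
  filter_upwards [hae, ae_restrict_mem hs] with x hx hxs
  exact hu.injOn (hhS hxs) (hgS hxs) (mul_right_cancel₀ (hf x hxs).ne' hx)

/-- `v x` is the winner's value net of the investment, `x - I` in the paper. -/
theorem revenue_ranking_steepness_mlr_general [LinearOrder α] (hs : MeasurableSet s)
    {fz fy : α → ℝ} (hfz : ∀ x ∈ s, 0 < fz x) (hfy : ∀ x ∈ s, 0 ≤ fy x)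
    (hratio : MonotoneOn (fun x ↦ fy x / fz x) s)
    {S : Set ℝ} {u : ℝ → ℝ} (huconc : ConcaveOn ℝ S u) (humono : StrictMonoOn u S)
    {v φ ψ : α → ℝ} (hφS : Set.MapsTo (fun x ↦ v x - φ x) s S)
    (hψS : Set.MapsTo (fun x ↦ v x - ψ x) s S)
    (hφprofit : MonotoneOn (fun x ↦ v x - φ x) s)
    (hquasi : QuasiMonotoneOn (fun x ↦ φ x - ψ x) s)
    (huφ : IntegrableOn (fun x ↦ u (v x - φ x) * fz x) s μ)
    (huψ : IntegrableOn (fun x ↦ u (v x - ψ x) * fz x) s μ)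
    (hφ : IntegrableOn (fun x ↦ φ x * fy x) s μ)
    (hψ : IntegrableOn (fun x ↦ ψ x * fy x) s μ)
    (hle : ∫ x in s, u (v x - φ x) * fz x ∂μ ≤ ∫ x in s, u (v x - ψ x) * fz x ∂μ) :
    ∫ x in s, ψ x * fy x ∂μ ≤ ∫ x in s, φ x * fy x ∂μ := by
  by_cases! hpos : ∀ x ∈ s, ψ x ≤ φ x
  · exact setIntegral_mono_on hψ hφ hs fun x hx ↦
      mul_le_mul_of_nonneg_right (hpos x hx) (hfy x hx)
  by_cases! hneg : ∀ x ∈ s, φ x ≤ ψ x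
  · have hae := ae_eq_of_le_of_setIntegral_comp_mul_le hs hfz humono hφS hψS
      (fun x hx ↦ sub_le_sub_left (hneg x hx) _) huφ huψ hle
    refine (integral_congr_ae ?_).le
    filter_upwards [hae] with x hx
    rw [sub_right_injective hx]
  obtain ⟨p, hp, hdp⟩ := hpos
  obtain ⟨q, hq, hdq⟩ := hneg
  obtain ⟨k, hk, r, hr, hbound⟩ := QuasiMonotoneOn.exists_forall_mul_comp_sub_mul_le
    (by simpa only [sub_sub_sub_cancel_left] using hquasi) huconc humono hφS hψS hφprofit
    hfz hfy hratio hp hq (sub_lt_sub_left hdp _) (sub_lt_sub_left hdq _)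
  simp only [sub_sub_sub_cancel_left, sub_mul] at hbound
  have hint := setIntegral_mono_on ((huψ.sub huφ).const_mul r) ((hφ.sub hψ).const_mul k) hs hbound
  rw [integral_const_mul, integral_const_mul, integral_sub' huψ huφ, integral_sub' hφ hψ] at hint
  exact sub_nonneg.1 <| nonneg_of_mul_nonneg_right
    ((mul_nonneg hr (sub_nonneg.2 hle)).trans hint) hk

end Integral

/-- Ex-post form of the revenue ranking under PD-MLR (Proposition 3.1): with break-even bids
at the density `f_z` and a nondecreasing likelihood ratio `f_y / f_z`, the steeper security
`φ` yields a weakly larger expected payment under the density `f_y`. -/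
theorem revenue_ranking_steepness_mlr
    (a b : ℝ) (hab : a < b) (I : ℝ)
    (fz fy : ℝ → ℝ)
    (hfz : ∀ x ∈ Set.Icc a b, 0 < fz x) (hfy : ∀ x ∈ Set.Icc a b, 0 < fy x)
    (hfzint : IntegrableOn fz (Set.Icc a b)) (hfyint : IntegrableOn fy (Set.Icc a b))
    (hfzone : ∫ x in Set.Icc a b, fz x = 1) (hfyone : ∫ x in Set.Icc a b, fy x = 1)
    (hratio : MonotoneOn (fun x => fy x / fz x) (Set.Icc a b))
    (u : ℝ → ℝ) (huconc : ConcaveOn ℝ Set.univ u) (humono : StrictMono u)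
    (φ ψ : ℝ → ℝ)
    (hφcont : ContinuousOn φ (Set.Icc a b)) (hψcont : ContinuousOn ψ (Set.Icc a b))
    (hφmono : MonotoneOn φ (Set.Icc a b)) (hψmono : MonotoneOn ψ (Set.Icc a b))
    (hφprofit : MonotoneOn (fun x => x - φ x) (Set.Icc a b))
    (hψprofit : MonotoneOn (fun x => x - ψ x) (Set.Icc a b))
    (hquasi : ∀ w ∈ Set.Icc a b, ∀ w' ∈ Set.Icc a b, w' < w →
      0 < φ w' - ψ w' → 0 ≤ φ w - ψ w)
    (hint₁ : IntegrableOn (fun x => u (x - I - φ x) * fz x) (Set.Icc a b))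
    (hint₂ : IntegrableOn (fun x => u (x - I - ψ x) * fz x) (Set.Icc a b))
    (hint₃ : IntegrableOn (fun x => φ x * fz x) (Set.Icc a b))
    (hint₄ : IntegrableOn (fun x => ψ x * fz x) (Set.Icc a b))
    (hint₅ : IntegrableOn (fun x => φ x * fy x) (Set.Icc a b))
    (hint₆ : IntegrableOn (fun x => ψ x * fy x) (Set.Icc a b))
    (heqφ : ∫ x in Set.Icc a b, u (x - I - φ x) * fz x = 0)
    (heqψ : ∫ x in Set.Icc a b, u (x - I - ψ x) * fz x = 0) :
    ∫ x in Set.Icc a b, ψ x * fy x ≤ ∫ x in Set.Icc a b, φ x * fy x :=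
  revenue_ranking_steepness_mlr_general measurableSet_Icc hfz (fun x hx ↦ (hfy x hx).le)
    hratio huconc (humono.strictMonoOn _) (v := fun x ↦ x - I) (Set.mapsTo_univ _ _)
    (Set.mapsTo_univ _ _) (fun x hx y hy hxy ↦ by linarith [hφprofit hx hy hxy])
    (fun x hx y hy hxy ↦ hquasi y hy x hx hxy) hint₁ hint₂ hint₅ hint₆ (heqφ.trans heqψ.symm).le
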